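/- Let S be an abelian subgroup of the Pauli group G_d^n with no nontrivial scalars and with Nat.card S = d^n. Then the fixed subspace Fix(S) has complex dimension 1, and S is a maximal set of Pauli operators stabilizing it: for every nonzero ψ ∈ Fix(S) and every P ∈ G_d^n with P.mulVec ψ = ψ, one has P ∈ S. -/

import Mathlib

open Matrix

noncomputable def q (d : ℕ) : ℂ := Complex.exp (2 * Real.pi * Complex.I / d)

/-- Dot product of two vectors over `ZMod d`. -/
def dotp {n d : ℕ} (A B : Fin n → ZMod d) : ZMod d := ∑ i, A i * B i

/-- The Pauli word `W(U,V)` with entries `q^{⟨U,J⟩}` at `(J, K)` when `J = K + V`. -/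
noncomputable def PauliWord (d n : ℕ) (U V : Fin n → ZMod d) :
    Matrix (Fin n → ZMod d) (Fin n → ZMod d) ℂ :=
  Matrix.of fun J K => if J = K + V then q d ^ (dotp U J).val else 0

/-- The n-qudit Pauli group, as a set of matrices. -/
noncomputable def PauliSet (d n : ℕ) : Set (Matrix (Fin n → ZMod d) (Fin n → ZMod d) ℂ) :=
  {g | ∃ (k : ZMod d) (U V : Fin n → ZMod d), g = q d ^ k.val • PauliWord d n U V}

/-- The subspace of states fixed by every matrix in `S`. -/
noncomputable def FixSubspace (d n : ℕ) [NeZero d]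
    (S : Set (Matrix (Fin n → ZMod d) (Fin n → ZMod d) ℂ)) :
    Submodule ℂ ((Fin n → ZMod d) → ℂ) where
  carrier := {ψ | ∀ s ∈ S, s.mulVec ψ = ψ}
  add_mem' := by
    intro a b ha hb s hs
    simp [Matrix.mulVec_add, ha s hs, hb s hs]
  zero_mem' := by
    intro s hs
    simp [Matrix.mulVec_zero]
  smul_mem' := by
    intro c a ha s hs
    simp [Matrix.mulVec_smul, ha s hs]

/-!
A nontrivial Pauli word has trace `0`: its diagonal vanishes or is a nontrivial character. Hence, if
a group `T` of Pauli operators contains no scalar but `1`, then `1` is its only element of nonzero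
trace. The projection onto `Fix T` is the average of `T`, and comparing traces gives
`|T| * dim (Fix T) = d ^ n`.

For `|S| = d ^ n` this says `dim (Fix S) = 1`. The group `T` of all Pauli operators fixing some
`ψ ≠ 0` contains no scalar but `1` either, and `ψ ∈ Fix T`, so `|T| ≤ d ^ n`. If `ψ ∈ Fix S`, then
`S ⊆ T`, and equality of cardinalities forces `S = T`.
-/

theorem card_mul_finrank_invariants_of_character_eq_zero {k G V : Type*} [Field k] [CharZero k]
    [Group G] [Finite G] [AddCommGroup V] [Module k V] [FiniteDimensional k V]
    (ρ : Representation k G V) (hρ : ∀ g ≠ 1, ρ.character g = 0) :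
    Nat.card G * Module.finrank k ρ.invariants = Module.finrank k V := by
  have := Fintype.ofFinite G
  have hcard : (Nat.card G : k) ≠ 0 := Nat.cast_ne_zero.2 Nat.card_pos.ne'
  have := invertibleOfNonzero hcard
  have haverage : (Nat.card G : k)⁻¹ * Module.finrank k V = Module.finrank k ρ.invariants := by
    rw [← ρ.card_inv_mul_sum_char_eq_finrank, Fintype.sum_eq_single 1 hρ, ρ.char_one]
  rw [inv_mul_eq_iff_eq_mul₀ hcard] at haverage
  exact_mod_cast haverage.symm

theorem isUnit_of_isUnit_coe_of_finite {M : Type*} [Monoid M] {T : Submonoid M} [Finite T]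
    {a : T} (ha : IsUnit (a : M)) : IsUnit a := by
  have hregular : IsLeftRegular a := fun b c h ↦
    Subtype.ext (ha.mul_left_cancel (congrArg Subtype.val h))
  exact hregular.isUnit_of_finite

section Pauli

variable {d n : ℕ} [NeZero d]

theorem q_pow_val (x : ZMod d) : q d ^ x.val = ZMod.stdAddChar x := by
  conv_rhs => rw [← ZMod.natCast_zmod_val x, ← Int.cast_natCast, ZMod.stdAddChar_coe]
  rw [q, ← Complex.exp_nat_mul]
  congr 1
  push_cast
  ring

theorem sum_stdAddChar_dotProduct_eq_zero {ι : Type*} [Fintype ι] [DecidableEq ι]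
    {u : ι → ZMod d} (hu : u ≠ 0) :
    ∑ v : ι → ZMod d, ZMod.stdAddChar (u ⬝ᵥ v) = 0 := by
  let χ : AddChar (ι → ZMod d) ℂ :=
    ZMod.stdAddChar.compAddMonoidHom (AddMonoidHom.mk' (u ⬝ᵥ ·) (dotProduct_add u))
  obtain ⟨i, hi⟩ := Function.ne_iff.1 hu
  have hχ : χ (Pi.single i 1) ≠ 1 := by
    simpa [χ, dotProduct_single_one] using
      ZMod.injective_stdAddChar.ne_iff' ZMod.stdAddChar.map_zero_eq_one |>.2 hi
  exact AddChar.sum_eq_zero_iff_ne_zero.2 (AddChar.ne_zero_iff.2 ⟨_, hχ⟩ : χ ≠ 0)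

theorem pauliWord_apply (U V J K : Fin n → ZMod d) :
    PauliWord d n U V J K = if J = K + V then ZMod.stdAddChar (U ⬝ᵥ J) else 0 := by
  rw [← q_pow_val]
  rfl

theorem pauliWord_zero_zero : PauliWord d n 0 0 = 1 := by
  ext J K
  simp [pauliWord_apply, one_apply]

theorem pauliWord_mul_pauliWord (U V U' V' : Fin n → ZMod d) :
    PauliWord d n U V * PauliWord d n U' V' =
      ZMod.stdAddChar (-(U' ⬝ᵥ V)) • PauliWord d n (U + U') (V + V') := by
  ext J K
  rw [mul_apply, Finset.sum_eq_single (K + V') (fun L _ hL ↦ by simp [pauliWord_apply, hL])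
    (by simp)]
  simp only [pauliWord_apply, Matrix.smul_apply, smul_eq_mul, if_true, add_assoc, add_comm V' V]
  split_ifs with hJ
  · rw [← AddChar.map_add_eq_mul, ← AddChar.map_add_eq_mul, hJ]
    simp only [add_dotProduct, dotProduct_add]
    congr 1
    ring
  · simp

theorem trace_pauliWord_eq_zero {U V : Fin n → ZMod d} (h : U ≠ 0 ∨ V ≠ 0) :
    (PauliWord d n U V).trace = 0 := by
  by_cases hV : V = 0
  · have hU : U ≠ 0 := h.resolve_right (not_not.2 hV)
    simpa [trace, pauliWord_apply, hV] using sum_stdAddChar_dotProduct_eq_zero hU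
  · simp [trace, pauliWord_apply, hV]

theorem mem_pauliSet_iff {P : Matrix (Fin n → ZMod d) (Fin n → ZMod d) ℂ} :
    P ∈ PauliSet d n ↔
      ∃ (k : ZMod d) (U V : Fin n → ZMod d), P = ZMod.stdAddChar k • PauliWord d n U V := by
  simp only [PauliSet, Set.mem_ofPred_eq, q_pow_val]

theorem one_mem_pauliSet : 1 ∈ PauliSet d n :=
  mem_pauliSet_iff.2 ⟨0, 0, 0, by simp [pauliWord_zero_zero]⟩

theorem mul_mem_pauliSet {P Q : Matrix (Fin n → ZMod d) (Fin n → ZMod d) ℂ}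
    (hP : P ∈ PauliSet d n) (hQ : Q ∈ PauliSet d n) : P * Q ∈ PauliSet d n := by
  obtain ⟨k, U, V, rfl⟩ := mem_pauliSet_iff.1 hP
  obtain ⟨l, U', V', rfl⟩ := mem_pauliSet_iff.1 hQ
  refine mem_pauliSet_iff.2 ⟨k + l + -(U' ⬝ᵥ V), U + U', V + V', ?_⟩
  rw [smul_mul_smul_comm, pauliWord_mul_pauliWord, smul_smul, AddChar.map_add_eq_mul,
    AddChar.map_add_eq_mul]

theorem isUnit_of_mem_pauliSet {P : Matrix (Fin n → ZMod d) (Fin n → ZMod d) ℂ}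
    (hP : P ∈ PauliSet d n) : IsUnit P := by
  obtain ⟨k, U, V, rfl⟩ := mem_pauliSet_iff.1 hP
  refine IsUnit.of_mul_eq_one (ZMod.stdAddChar (-k - U ⬝ᵥ V) • PauliWord d n (-U) (-V)) ?_
  rw [smul_mul_smul_comm, pauliWord_mul_pauliWord, smul_smul, ← AddChar.map_add_eq_mul,
    ← AddChar.map_add_eq_mul, add_neg_cancel, add_neg_cancel, pauliWord_zero_zero]
  have hexponent : k + (-k - U ⬝ᵥ V) + -(-U ⬝ᵥ V) = 0 := by
    rw [neg_dotProduct]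
    ring
  rw [hexponent, AddChar.map_zero_eq_one, one_smul]

theorem finite_pauliSet : (PauliSet d n).Finite := by
  refine (Set.finite_range fun p : ZMod d × (Fin n → ZMod d) × (Fin n → ZMod d) ↦
    ZMod.stdAddChar p.1 • PauliWord d n p.2.1 p.2.2).subset fun P hP ↦ ?_
  obtain ⟨k, U, V, rfl⟩ := mem_pauliSet_iff.1 hP
  exact ⟨(k, U, V), rfl⟩

theorem eq_smul_one_or_trace_eq_zero_of_mem_pauliSet
    {P : Matrix (Fin n → ZMod d) (Fin n → ZMod d) ℂ} (hP : P ∈ PauliSet d n) :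
    (∃ c : ℂ, P = c • 1) ∨ P.trace = 0 := by
  obtain ⟨k, U, V, rfl⟩ := mem_pauliSet_iff.1 hP
  by_cases hUV : U = 0 ∧ V = 0
  · obtain ⟨rfl, rfl⟩ := hUV
    exact .inl ⟨_, by rw [pauliWord_zero_zero]⟩
  · exact .inr (by rw [trace_smul, trace_pauliWord_eq_zero (not_and_or.1 hUV), smul_zero])

theorem card_mul_finrank_fixSubspace
    {T : Submonoid (Matrix (Fin n → ZMod d) (Fin n → ZMod d) ℂ)} (hT : ↑T ⊆ PauliSet d n)
    (hscalar : ∀ c : ℂ, c • (1 : Matrix (Fin n → ZMod d) (Fin n → ZMod d) ℂ) ∈ T →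
      c • (1 : Matrix (Fin n → ZMod d) (Fin n → ZMod d) ℂ) = 1) :
    Nat.card T * Module.finrank ℂ (FixSubspace d n T) = d ^ n := by
  have : Finite T := finite_pauliSet.subset hT
  let : Group T := groupOfIsUnit fun a ↦
    isUnit_of_isUnit_coe_of_finite (isUnit_of_mem_pauliSet (hT a.2))
  let ρ : Representation ℂ T ((Fin n → ZMod d) → ℂ) :=
    (toLinAlgEquiv' : _ ≃ₐ[ℂ] _).toMonoidHom.comp T.subtype
  have htrace (P : T) (hP : P ≠ 1) : ρ.character P = 0 := by
    change LinearMap.trace ℂ _ (toLin' P.1) = 0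
    rw [trace_toLin'_eq]
    refine (eq_smul_one_or_trace_eq_zero_of_mem_pauliSet (hT P.2)).resolve_left ?_
    rintro ⟨c, hc⟩
    exact hP (Subtype.ext (hc.trans (hscalar c (hc ▸ P.2))))
  have hinvariants : ρ.invariants = FixSubspace d n T := by
    ext ψ
    exact Subtype.forall
  rw [← hinvariants, card_mul_finrank_invariants_of_character_eq_zero ρ htrace]
  simp [ZMod.card]

/-- The stabilizer of the state `ψ` in the Pauli group. It is bundled as a submonoid since the
Pauli group is a set of matrices; being finite and made of invertible matrices, it is a group. -/
def pauliStabilizer (ψ : (Fin n → ZMod d) → ℂ) :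
    Submonoid (Matrix (Fin n → ZMod d) (Fin n → ZMod d) ℂ) where
  carrier := {P | P ∈ PauliSet d n ∧ P *ᵥ ψ = ψ}
  one_mem' := ⟨one_mem_pauliSet, one_mulVec ψ⟩
  mul_mem' := fun ⟨hP, hPψ⟩ ⟨hQ, hQψ⟩ ↦
    ⟨mul_mem_pauliSet hP hQ, by rw [← mulVec_mulVec, hQψ, hPψ]⟩

theorem finite_pauliStabilizer (ψ : (Fin n → ZMod d) → ℂ) :
    (pauliStabilizer ψ : Set (Matrix (Fin n → ZMod d) (Fin n → ZMod d) ℂ)).Finite :=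
  finite_pauliSet.subset fun _ hP ↦ hP.1

theorem card_pauliStabilizer_le {ψ : (Fin n → ZMod d) → ℂ} (hψ : ψ ≠ 0) :
    Nat.card (pauliStabilizer ψ) ≤ d ^ n := by
  have hcard : Nat.card (pauliStabilizer ψ) *
      Module.finrank ℂ (FixSubspace d n (pauliStabilizer ψ)) = d ^ n := by
    refine card_mul_finrank_fixSubspace (fun _ hP ↦ hP.1) fun c ⟨_, hc⟩ ↦ ?_
    rw [smul_mulVec, one_mulVec] at hc
    rw [smul_left_injective ℂ hψ (hc.trans (one_smul ℂ ψ).symm), one_smul]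
  have hψmem : ψ ∈ FixSubspace d n (pauliStabilizer ψ) := fun _ hP ↦ hP.2
  have : Nontrivial (FixSubspace d n (pauliStabilizer ψ)) :=
    ⟨⟨ψ, hψmem⟩, 0, fun h ↦ hψ (congrArg Subtype.val h)⟩
  exact hcard ▸ Nat.le_mul_of_pos_right _ Module.finrank_pos

end Pauli

theorem fixSubspace_dim_one_and_maximal (d n : ℕ) [NeZero d] (hd : 2 ≤ d) (hn : 1 ≤ n)
    (S : Set (Matrix (Fin n → ZMod d) (Fin n → ZMod d) ℂ))
    (hSsub : S ⊆ PauliSet d n)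
    (hS1 : (1 : Matrix (Fin n → ZMod d) (Fin n → ZMod d) ℂ) ∈ S)
    (hSmul : ∀ a ∈ S, ∀ b ∈ S, a * b ∈ S)
    (hSinv : ∀ a ∈ S, ∃ b ∈ S, a * b = 1)
    (hScomm : ∀ a ∈ S, ∀ b ∈ S, a * b = b * a)
    (hSscal : ∀ c : ℂ, c • (1 : Matrix (Fin n → ZMod d) (Fin n → ZMod d) ℂ) ∈ S →
      c • (1 : Matrix (Fin n → ZMod d) (Fin n → ZMod d) ℂ) = 1)
    (hcard : Nat.card S = d ^ n) :
    Module.finrank ℂ (FixSubspace d n S) = 1 ∧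
    ∀ ψ ∈ FixSubspace d n S, ψ ≠ 0 →
      ∀ P ∈ PauliSet d n, P.mulVec ψ = ψ → P ∈ S := by
  constructor
  · let T : Submonoid (Matrix (Fin n → ZMod d) (Fin n → ZMod d) ℂ) :=
      { carrier := S, one_mem' := hS1, mul_mem' := fun ha hb ↦ hSmul _ ha _ hb }
    have hT : Nat.card S * Module.finrank ℂ (FixSubspace d n S) = d ^ n :=
      card_mul_finrank_fixSubspace (T := T) hSsub hSscal
    rw [hcard] at hT
    exact (Nat.mul_eq_left (NeZero.ne (d ^ n))).1 hT
  · intro ψ hψ hψ0 P hP hPψ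
    have hle : S ⊆ pauliStabilizer ψ := fun s hs ↦ ⟨hSsub hs, hψ s hs⟩
    have hS : S = pauliStabilizer ψ := Set.eq_of_subset_of_ncard_le hle
      ((card_pauliStabilizer_le hψ0).trans_eq hcard.symm) (finite_pauliStabilizer ψ)
    exact hS ▸ ⟨hP, hPψ⟩
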